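/- Let ψ : ℝ^n → ℝ be μ-strongly convex (μ > 0) and f_1, …, f_m : ℝ^n → ℝ convex and differentiable with L_i-Lipschitz gradients; L_max = max_i L_i. Fix x ∈ ℝ^n, x* ∈ ∂ψ(x), a subset J ⊆ {1,…,m}, weights w_i > 0 with ∑_{i∈J} w_i = 1, and suppose ∑_{i∈J} w_i‖∇f_i(x)‖² > 0. Set α = ∑_{i∈J} w_i ∇f_i(x), β = ⟨α, x⟩ − ∑_{i∈J}(w_i/L_i)‖∇f_i(x)‖², H = {z : ⟨α, z⟩ ≤ β}, and L_adapt = ‖α‖² / ∑_{i∈J} w_i‖∇f_i(x)‖². Let the stepsize t be either the block adaptive extrapolated stepsize t = μ/(L_max·L_adapt), or any minimizer t = t̂ of s ↦ ψ*(x* − s·α) + s·β over ℝ (the exact projective stepsize), and define x⁺* = x* − t·α, x⁺ = ∇ψ*(x⁺*). Then for every z ∈ H: D_ψ^{x⁺*}(x⁺, z) ≤ D_ψ^{x*}(x, z) − ( μ/(2 L_max² L_adapt) )·∑_{i∈J} w_i‖∇f_i(x)‖². -/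

import Mathlib

open MeasureTheory ProbabilityTheory RealInnerProductSpace
open scoped BigOperators

noncomputable section

/-- `xs` is a subgradient of `ψ` at `x`: `ψ(y) ≥ ψ(x) + ⟨xs, y - x⟩` for all `y`. -/
def IsSubgrad {n : ℕ} (ψ : EuclideanSpace ℝ (Fin n) → ℝ) (x xs : EuclideanSpace ℝ (Fin n)) : Prop :=
  ∀ y, ψ x + ⟪xs, y - x⟫ ≤ ψ y

/-- Bregman distance `D_ψ^{xs}(x, y) = ψ(y) - ψ(x) - ⟨xs, y - x⟩`. -/
def Breg {n : ℕ} (ψ : EuclideanSpace ℝ (Fin n) → ℝ) (x xs y : EuclideanSpace ℝ (Fin n)) : ℝ :=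
  ψ y - ψ x - ⟪xs, y - x⟫

/-- `ψ` is `α`-strongly convex:
`ψ(y) ≥ ψ(x) + ⟨xs, y - x⟩ + (α/2)‖y - x‖²` for all `x, y` and all subgradients `xs ∈ ∂ψ(x)`. -/
def SubgradStrongConvex {n : ℕ} (ψ : EuclideanSpace ℝ (Fin n) → ℝ) (α : ℝ) : Prop :=
  ∀ x y xs, IsSubgrad ψ x xs → ψ x + ⟪xs, y - x⟫ + α / 2 * ‖y - x‖ ^ 2 ≤ ψ y

/-- Fenchel conjugate `ψ*(p) = sup_z (⟨p, z⟩ - ψ(z))`. -/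
def fenchel {n : ℕ} (ψ : EuclideanSpace ℝ (Fin n) → ℝ) (p : EuclideanSpace ℝ (Fin n)) : ℝ :=
  ⨆ z, (⟪p, z⟫ - ψ z)

/-- `xhat` is the Bregman projection of `x` onto `C` w.r.t. `ψ` and the subgradient `xs`:
it belongs to `C` and minimizes `y ↦ D_ψ^{xs}(x, y)` over `C`. -/
def IsBregProj {n : ℕ} (ψ : EuclideanSpace ℝ (Fin n) → ℝ) (x xs : EuclideanSpace ℝ (Fin n))
    (C : Set (EuclideanSpace ℝ (Fin n))) (xhat : EuclideanSpace ℝ (Fin n)) : Prop :=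
  xhat ∈ C ∧ ∀ y ∈ C, Breg ψ x xs xhat ≤ Breg ψ x xs y

/-- The proximity objective `F(x) = (1/m) ∑_{i=1}^m f_i(x)`. -/
def Fobj {n m : ℕ} (f : Fin m → EuclideanSpace ℝ (Fin n) → ℝ) (v : EuclideanSpace ℝ (Fin n)) : ℝ :=
  (m : ℝ)⁻¹ * ∑ i, f i v

/-- The set of (global) minimizers of `F = (1/m) ∑ f_i`. -/
def ArgminSet {n m : ℕ} (f : Fin m → EuclideanSpace ℝ (Fin n) → ℝ) :
    Set (EuclideanSpace ℝ (Fin n)) :=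
  {z | ∀ y, Fobj f z ≤ Fobj f y}

/-- Squared Bregman distance from `z` (with subgradient `zs`) to a set `X`:
`inf_{w ∈ X} D_ψ^{zs}(z, w)`. -/
def distSq {n : ℕ} (ψ : EuclideanSpace ℝ (Fin n) → ℝ) (z zs : EuclideanSpace ℝ (Fin n))
    (X : Set (EuclideanSpace ℝ (Fin n))) : ℝ :=
  ⨅ w : X, Breg ψ z zs (w : EuclideanSpace ℝ (Fin n))

/-!
A `μ`-strong subgradient `xs` of `ψ` at `x` squeezes the conjugate around `xs`:
`0 ≤ ψ* p - ψ* xs - ⟪p - xs, x⟫ ≤ ‖p - xs‖² / (2μ)`. Hence `∇ψ* xs = x`, and since by coercivity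
every `p` is a subgradient somewhere, `p` is a subgradient of `ψ` at `∇ψ* p`. The Bregman distances
from `x` and from `x⁺ = ∇ψ* (xs - t α)` can thus be written through `ψ*`, and for `z ∈ H` and
`t ≥ 0` their difference is at most `g t - g 0`, where `g s = ψ* (xs - s α) + s β`.

With `r = ⟪α, x⟫ - β`, the squeeze reads `g 0 - s r ≤ g s ≤ g 0 - s r + s² ‖α‖² / (2μ)`. For any
`0 < δ ≤ r` the upper bound at `s = μ δ / ‖α‖²` gives a decrease of `μ δ² / (2 ‖α‖²)`. A minimizer of
`g` does at least as well, and it is nonnegative by the lower bound. The adaptive stepsize is the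
case `δ = (∑ w_i ‖∇f_i(x)‖²) / L_max`.
-/

lemma real_inner_le_norm_sq_div_add_mul_norm_sq {E : Type*} [NormedAddCommGroup E]
    [InnerProductSpace ℝ E] {ε : ℝ} (hε : 0 < ε) (u v : E) :
    ⟪u, v⟫ ≤ ‖u‖ ^ 2 / (2 * ε) + ε / 2 * ‖v‖ ^ 2 := by
  have hcs : ⟪u, v⟫ ≤ ‖v‖ * ‖u‖ := by
    rw [mul_comm]
    exact real_inner_le_norm u v
  have hyoung : 2 * ‖v‖ * ‖u‖ ≤ ε * ‖v‖ ^ 2 + ε⁻¹ * ‖u‖ ^ 2 := two_mul_le_add_mul_sq hε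
  have hrw : ‖u‖ ^ 2 / (2 * ε) = ε⁻¹ * ‖u‖ ^ 2 / 2 := by field_simp
  linarith

/-- `xs` is a `μ`-strong subgradient of `ψ` at `x`: the subgradient inequality holds with the extra
quadratic term `(μ/2)‖y - x‖²`. It isolates what strong convexity says at a single point. -/
def IsStrongSubgrad {n : ℕ} (ψ : EuclideanSpace ℝ (Fin n) → ℝ) (μ : ℝ)
    (x xs : EuclideanSpace ℝ (Fin n)) : Prop :=
  ∀ y, ψ x + ⟪xs, y - x⟫ + μ / 2 * ‖y - x‖ ^ 2 ≤ ψ y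

section Conjugate

variable {n : ℕ} {ψ : EuclideanSpace ℝ (Fin n) → ℝ} {μ : ℝ} {x xs : EuclideanSpace ℝ (Fin n)}

lemma isSubgrad_iff_inner_sub_le :
    IsSubgrad ψ x xs ↔ ∀ y, ⟪xs, y⟫ - ψ y ≤ ⟪xs, x⟫ - ψ x := by
  refine forall_congr' fun y => ?_
  rw [inner_sub_right]
  constructor <;> intro h <;> linarith

namespace IsSubgrad

lemma fenchel_eq (h : IsSubgrad ψ x xs) : fenchel ψ xs = ⟪xs, x⟫ - ψ x := by
  have hle := isSubgrad_iff_inner_sub_le.1 h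
  exact le_antisymm (ciSup_le hle) (le_ciSup ⟨_, Set.forall_mem_range.2 hle⟩ x)

lemma breg_eq (h : IsSubgrad ψ x xs) (z : EuclideanSpace ℝ (Fin n)) :
    Breg ψ x xs z = fenchel ψ xs + ψ z - ⟪xs, z⟫ := by
  rw [h.fenchel_eq, Breg, inner_sub_right]
  ring

end IsSubgrad

lemma SubgradStrongConvex.isStrongSubgrad (hsc : SubgradStrongConvex ψ μ)
    (h : IsSubgrad ψ x xs) : IsStrongSubgrad ψ μ x xs :=
  fun y => hsc x y xs h

namespace IsStrongSubgrad

lemma isSubgrad (hμ : 0 ≤ μ) (h : IsStrongSubgrad ψ μ x xs) : IsSubgrad ψ x xs :=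
  fun y => (le_add_of_nonneg_right (by positivity)).trans (h y)

lemma inner_sub_le (hμ : 0 < μ) (h : IsStrongSubgrad ψ μ x xs) (p y : EuclideanSpace ℝ (Fin n)) :
    ⟪p, y⟫ - ψ y ≤ ⟪p, x⟫ - ψ x + ‖p - xs‖ ^ 2 / (2 * μ) := by
  have hy := h y
  have hyoung := real_inner_le_norm_sq_div_add_mul_norm_sq hμ (p - xs) (y - x)
  simp only [inner_sub_left, inner_sub_right] at hy hyoung
  linarith

lemma fenchel_le (hμ : 0 < μ) (h : IsStrongSubgrad ψ μ x xs) (p : EuclideanSpace ℝ (Fin n)) :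
    fenchel ψ p ≤ ⟪p, x⟫ - ψ x + ‖p - xs‖ ^ 2 / (2 * μ) :=
  ciSup_le (h.inner_sub_le hμ p)

lemma le_fenchel (hμ : 0 < μ) (h : IsStrongSubgrad ψ μ x xs) (p y : EuclideanSpace ℝ (Fin n)) :
    ⟪p, y⟫ - ψ y ≤ fenchel ψ p :=
  le_ciSup (f := fun z => ⟪p, z⟫ - ψ z) ⟨_, Set.forall_mem_range.2 (h.inner_sub_le hμ p)⟩ y

lemma fenchel_le_fenchel_add (hμ : 0 < μ) (h : IsStrongSubgrad ψ μ x xs)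
    (p : EuclideanSpace ℝ (Fin n)) :
    fenchel ψ p ≤ fenchel ψ xs + ⟪p - xs, x⟫ + ‖p - xs‖ ^ 2 / (2 * μ) := by
  have hle := h.fenchel_le hμ p
  rw [(h.isSubgrad hμ.le).fenchel_eq, inner_sub_left]
  linarith

lemma fenchel_add_le_fenchel (hμ : 0 < μ) (h : IsStrongSubgrad ψ μ x xs)
    (p : EuclideanSpace ℝ (Fin n)) :
    fenchel ψ xs + ⟪p - xs, x⟫ ≤ fenchel ψ p := by
  have hle := h.le_fenchel hμ p x
  rw [(h.isSubgrad hμ.le).fenchel_eq, inner_sub_left]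
  linarith

lemma hasGradientAt_fenchel (hμ : 0 < μ) (h : IsStrongSubgrad ψ μ x xs) :
    HasGradientAt (fenchel ψ) x xs := by
  rw [hasGradientAt_iff_isLittleO]
  have hO : (fun p => fenchel ψ p - fenchel ψ xs - ⟪x, p - xs⟫) =O[nhds xs]
      fun p => ‖p - xs‖ ^ 2 := by
    refine .of_bound (2 * μ)⁻¹ (.of_forall fun p => ?_)
    have hupper := h.fenchel_le_fenchel_add hμ p
    have hlower := h.fenchel_add_le_fenchel hμ p
    rw [real_inner_comm, Real.norm_of_nonneg (by linarith), Real.norm_of_nonneg (by positivity),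
      inv_mul_eq_div]
    linarith
  exact hO.trans_isLittleO (Asymptotics.isLittleO_pow_sub_sub xs one_lt_two)

lemma tendsto_sub_inner_cocompact (hμ : 0 < μ) (h : IsStrongSubgrad ψ μ x xs)
    (p : EuclideanSpace ℝ (Fin n)) :
    Filter.Tendsto (fun y => ψ y - ⟪p, y⟫) (Filter.cocompact _) Filter.atTop := by
  have hnorm : Filter.Tendsto (fun y => ‖y - x‖) (Filter.cocompact _) Filter.atTop :=
    tendsto_norm_cocompact_atTop.comp (Homeomorph.subRight x).isClosedEmbedding.tendsto_cocompact
  have hquad : Filter.Tendsto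
      (fun y => ψ x - ⟪p, x⟫ - ‖p - xs‖ ^ 2 / μ + μ / 4 * ‖y - x‖ ^ 2)
      (Filter.cocompact _) Filter.atTop :=
    Filter.tendsto_atTop_add_const_left _ _ <|
      ((Filter.tendsto_pow_atTop two_ne_zero).comp hnorm).const_mul_atTop (by positivity)
  refine Filter.tendsto_atTop_mono (fun y => ?_) hquad
  have hy := h y
  -- Spending only half of the strong convexity on Young's inequality leaves the term `μ / 4`.
  have hyoung := real_inner_le_norm_sq_div_add_mul_norm_sq (half_pos hμ) (p - xs) (y - x)
  rw [mul_div_cancel₀ μ two_ne_zero] at hyoung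
  simp only [inner_sub_left, inner_sub_right] at hy hyoung
  linarith

lemma exists_isSubgrad (hμ : 0 < μ) (hψ : Continuous ψ) (h : IsStrongSubgrad ψ μ x xs)
    (p : EuclideanSpace ℝ (Fin n)) : ∃ y, IsSubgrad ψ y p := by
  have hcont : Continuous fun y => ψ y - ⟪p, y⟫ := by fun_prop
  obtain ⟨y, hy⟩ := hcont.exists_forall_le (h.tendsto_sub_inner_cocompact hμ p)
  refine ⟨y, isSubgrad_iff_inner_sub_le.2 fun z => ?_⟩
  linarith [hy z]

end IsStrongSubgrad

lemma SubgradStrongConvex.isSubgrad_gradient_fenchel (hμ : 0 < μ) (hψ : Continuous ψ)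
    (hsc : SubgradStrongConvex ψ μ) (hxs : IsSubgrad ψ x xs) (p : EuclideanSpace ℝ (Fin n)) :
    IsSubgrad ψ (gradient (fenchel ψ) p) p := by
  obtain ⟨y, hy⟩ := (hsc.isStrongSubgrad hxs).exists_isSubgrad hμ hψ p
  rwa [((hsc.isStrongSubgrad hy).hasGradientAt_fenchel hμ).gradient]

end Conjugate

/-- The dual objective `s ↦ ψ*(xs - s a) + s β` of the Bregman projection onto the halfspace
`{z | ⟪a, z⟫ ≤ β}`; its minimizers over `ℝ` are the exact projective stepsizes. -/
def halfspaceDual {n : ℕ} (ψ : EuclideanSpace ℝ (Fin n) → ℝ) (xs a : EuclideanSpace ℝ (Fin n))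
    (β s : ℝ) : ℝ :=
  fenchel ψ (xs - s • a) + s * β

section Halfspace

variable {n : ℕ} {ψ : EuclideanSpace ℝ (Fin n) → ℝ} {μ : ℝ} {x xs a : EuclideanSpace ℝ (Fin n)}
  {β δ t : ℝ}

lemma halfspaceDual_zero : halfspaceDual ψ xs a β 0 = fenchel ψ xs := by
  simp [halfspaceDual]

lemma halfspaceDual_le (hμ : 0 < μ) (h : IsStrongSubgrad ψ μ x xs) (s : ℝ) :
    halfspaceDual ψ xs a β s ≤
      halfspaceDual ψ xs a β 0 - s * (⟪a, x⟫ - β) + s ^ 2 * ‖a‖ ^ 2 / (2 * μ) := by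
  have hle := h.fenchel_le_fenchel_add hμ (xs - s • a)
  rw [sub_sub_cancel_left, inner_neg_left, real_inner_smul_left, norm_neg, norm_smul, mul_pow,
    Real.norm_eq_abs, sq_abs] at hle
  rw [halfspaceDual_zero, halfspaceDual]
  linarith

lemma le_halfspaceDual (hμ : 0 < μ) (h : IsStrongSubgrad ψ μ x xs) (s : ℝ) :
    halfspaceDual ψ xs a β 0 - s * (⟪a, x⟫ - β) ≤ halfspaceDual ψ xs a β s := by
  have hle := h.fenchel_add_le_fenchel hμ (xs - s • a)
  rw [sub_sub_cancel_left, inner_neg_left, real_inner_smul_left] at hle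
  rw [halfspaceDual_zero, halfspaceDual]
  linarith

lemma nonneg_of_forall_halfspaceDual_le (hμ : 0 < μ) (h : IsStrongSubgrad ψ μ x xs)
    (hx : β < ⟪a, x⟫) (hmin : ∀ s, halfspaceDual ψ xs a β t ≤ halfspaceDual ψ xs a β s) :
    0 ≤ t := by
  have hprod : 0 ≤ t * (⟪a, x⟫ - β) := by
    linarith [hmin 0, le_halfspaceDual (a := a) (β := β) hμ h t]
  exact nonneg_of_mul_nonneg_left hprod (sub_pos.2 hx)

lemma halfspaceDual_mul_div_norm_sq_le (hμ : 0 < μ) (h : IsStrongSubgrad ψ μ x xs) (ha : a ≠ 0)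
    (hδ : 0 ≤ δ) (hgap : δ ≤ ⟪a, x⟫ - β) :
    halfspaceDual ψ xs a β (μ * δ / ‖a‖ ^ 2) ≤
      halfspaceDual ψ xs a β 0 - μ * δ ^ 2 / (2 * ‖a‖ ^ 2) := by
  set s := μ * δ / ‖a‖ ^ 2 with hs
  calc halfspaceDual ψ xs a β s
      ≤ halfspaceDual ψ xs a β 0 - s * (⟪a, x⟫ - β) + s ^ 2 * ‖a‖ ^ 2 / (2 * μ) :=
        halfspaceDual_le hμ h s
    _ ≤ halfspaceDual ψ xs a β 0 - s * δ + s ^ 2 * ‖a‖ ^ 2 / (2 * μ) := by gcongr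
    _ = halfspaceDual ψ xs a β 0 - μ * δ ^ 2 / (2 * ‖a‖ ^ 2) := by
        have hna : ‖a‖ ≠ 0 := norm_ne_zero_iff.2 ha
        rw [hs]
        field_simp
        ring

lemma SubgradStrongConvex.breg_gradient_fenchel_le (hμ : 0 < μ) (hψ : Continuous ψ)
    (hsc : SubgradStrongConvex ψ μ) (hxs : IsSubgrad ψ x xs) (ht : 0 ≤ t)
    {z : EuclideanSpace ℝ (Fin n)} (hz : ⟪a, z⟫ ≤ β) :
    Breg ψ (gradient (fenchel ψ) (xs - t • a)) (xs - t • a) z ≤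
      Breg ψ x xs z + (halfspaceDual ψ xs a β t - halfspaceDual ψ xs a β 0) := by
  have htz : t * ⟪a, z⟫ ≤ t * β := mul_le_mul_of_nonneg_left hz ht
  rw [(hsc.isSubgrad_gradient_fenchel hμ hψ hxs _).breg_eq, hxs.breg_eq, halfspaceDual_zero,
    halfspaceDual, inner_sub_left, real_inner_smul_left]
  linarith

theorem SubgradStrongConvex.breg_gradient_fenchel_le_sub (hμ : 0 < μ) (hψ : Continuous ψ)
    (hsc : SubgradStrongConvex ψ μ) (hxs : IsSubgrad ψ x xs) (hδ : 0 < δ)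
    (hgap : δ ≤ ⟪a, x⟫ - β)
    (hstep : t = μ * δ / ‖a‖ ^ 2 ∨
      ∀ s, halfspaceDual ψ xs a β t ≤ halfspaceDual ψ xs a β s)
    {z : EuclideanSpace ℝ (Fin n)} (hz : ⟪a, z⟫ ≤ β) :
    Breg ψ (gradient (fenchel ψ) (xs - t • a)) (xs - t • a) z ≤
      Breg ψ x xs z - μ * δ ^ 2 / (2 * ‖a‖ ^ 2) := by
  have ha : a ≠ 0 := by
    rintro rfl
    rw [inner_zero_left] at hz hgap
    linarith
  have hstrong := hsc.isStrongSubgrad hxs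
  have hadapt := halfspaceDual_mul_div_norm_sq_le hμ hstrong ha hδ.le hgap
  obtain ⟨ht, hdecrease⟩ : 0 ≤ t ∧ halfspaceDual ψ xs a β t ≤
      halfspaceDual ψ xs a β 0 - μ * δ ^ 2 / (2 * ‖a‖ ^ 2) := by
    rcases hstep with rfl | hmin
    · exact ⟨by positivity, hadapt⟩
    · exact ⟨nonneg_of_forall_halfspaceDual_le hμ hstrong (by linarith) hmin,
        (hmin _).trans hadapt⟩
  linarith [hsc.breg_gradient_fenchel_le hμ hψ hxs ht hz]

end Halfspace

lemma sum_mul_div_le_sum_div_mul {ι 𝕜 : Type*} [Field 𝕜] [LinearOrder 𝕜] [IsStrictOrderedRing 𝕜]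
    {J : Finset ι} {w L c : ι → 𝕜} {M : 𝕜}
    (hwc : ∀ i ∈ J, 0 ≤ w i * c i) (hL : ∀ i ∈ J, 0 < L i) (hLM : ∀ i ∈ J, L i ≤ M) :
    (∑ i ∈ J, w i * c i) / M ≤ ∑ i ∈ J, w i / L i * c i := by
  rw [Finset.sum_div]
  refine Finset.sum_le_sum fun i hi => ?_
  rw [div_mul_eq_mul_div]
  exact div_le_div_of_nonneg_left (hwc i hi) (hL i hi) (hLM i hi)

theorem stmt9_general {n : ℕ} {ι : Type*} {ψ : EuclideanSpace ℝ (Fin n) → ℝ} {μ : ℝ}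
    (hμ : 0 < μ) (hψ : Continuous ψ) (hsc : SubgradStrongConvex ψ μ)
    {x xs : EuclideanSpace ℝ (Fin n)} (hxs : IsSubgrad ψ x xs)
    {J : Finset ι} {w L : ι → ℝ} {v : ι → EuclideanSpace ℝ (Fin n)} {Lmax : ℝ}
    (hw : ∀ i ∈ J, 0 ≤ w i) (hL : ∀ i ∈ J, 0 < L i) (hLmax : ∀ i ∈ J, L i ≤ Lmax)
    (hpos : 0 < ∑ i ∈ J, w i * ‖v i‖ ^ 2) {t : ℝ}
    (hstep :
      t = μ / (Lmax * (‖∑ i ∈ J, w i • v i‖ ^ 2 / ∑ i ∈ J, w i * ‖v i‖ ^ 2)) ∨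
      ∀ s : ℝ,
        fenchel ψ (xs - t • ∑ i ∈ J, w i • v i) +
          t * (⟪∑ i ∈ J, w i • v i, x⟫ - ∑ i ∈ J, w i / L i * ‖v i‖ ^ 2) ≤
        fenchel ψ (xs - s • ∑ i ∈ J, w i • v i) +
          s * (⟪∑ i ∈ J, w i • v i, x⟫ - ∑ i ∈ J, w i / L i * ‖v i‖ ^ 2))
    {z : EuclideanSpace ℝ (Fin n)}
    (hz : ⟪∑ i ∈ J, w i • v i, z⟫ ≤
      ⟪∑ i ∈ J, w i • v i, x⟫ - ∑ i ∈ J, w i / L i * ‖v i‖ ^ 2) :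
    Breg ψ (gradient (fenchel ψ) (xs - t • ∑ i ∈ J, w i • v i))
        (xs - t • ∑ i ∈ J, w i • v i) z ≤
      Breg ψ x xs z -
        μ / (2 * Lmax ^ 2 * (‖∑ i ∈ J, w i • v i‖ ^ 2 / ∑ i ∈ J, w i * ‖v i‖ ^ 2)) *
          ∑ i ∈ J, w i * ‖v i‖ ^ 2 := by
  obtain ⟨i, hi⟩ : J.Nonempty := Finset.nonempty_of_sum_ne_zero hpos.ne'
  have hLmax_pos : 0 < Lmax := (hL i hi).trans_le (hLmax i hi)
  have hgap := sum_mul_div_le_sum_div_mul (c := fun i => ‖v i‖ ^ 2)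
    (fun i hi => mul_nonneg (hw i hi) (sq_nonneg _)) hL hLmax
  set a := ∑ i ∈ J, w i • v i
  set S := ∑ i ∈ J, w i * ‖v i‖ ^ 2
  have hadapt : μ / (Lmax * (‖a‖ ^ 2 / S)) = μ * (S / Lmax) / ‖a‖ ^ 2 := by field_simp
  have hdecrease : μ / (2 * Lmax ^ 2 * (‖a‖ ^ 2 / S)) * S =
      μ * (S / Lmax) ^ 2 / (2 * ‖a‖ ^ 2) := by field_simp
  rw [hadapt] at hstep
  rw [hdecrease]
  exact hsc.breg_gradient_fenchel_le_sub hμ hψ hxs (div_pos hpos hLmax_pos)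
    (by rwa [sub_sub_cancel]) hstep hz

/-- Basic descent lemma, part (b): with the block adaptive extrapolated
stepsize `t = μ/(L_max·L_adapt)`, or any exact projective stepsize (a minimizer of
`s ↦ ψ*(xs − s·α) + s·β`), for every `z` in the halfspace `H`:
`D_ψ^{x⁺*}(x⁺, z) ≤ D_ψ^{xs}(x, z) − (μ/(2 L_max² L_adapt))·∑ w_i‖∇f_i(x)‖²`. -/
theorem stmt9 {n m : ℕ} (ψ : EuclideanSpace ℝ (Fin n) → ℝ) (μ : ℝ) (hμ : 0 < μ)
    (hψconv : ConvexOn ℝ Set.univ ψ) (hsc : SubgradStrongConvex ψ μ)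
    (f : Fin m → EuclideanSpace ℝ (Fin n) → ℝ)
    (hfconv : ∀ i, ConvexOn ℝ Set.univ (f i))
    (f' : Fin m → EuclideanSpace ℝ (Fin n) → EuclideanSpace ℝ (Fin n))
    (hdiff : ∀ i z, HasGradientAt (f i) (f' i z) z)
    (L : Fin m → ℝ) (hL : ∀ i, 0 < L i)
    (hlip : ∀ i z w, ‖f' i z - f' i w‖ ≤ L i * ‖z - w‖)
    (Lmax : ℝ) (hm : 0 < m) (hLmax : Lmax = ⨆ i, L i)
    (x xs : EuclideanSpace ℝ (Fin n)) (hxs : IsSubgrad ψ x xs)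
    (J : Finset (Fin m)) (w : Fin m → ℝ)
    (hw : ∀ i ∈ J, 0 < w i) (hwsum : ∑ i ∈ J, w i = 1)
    (hpos : 0 < ∑ i ∈ J, w i * ‖f' i x‖ ^ 2)
    (t : ℝ)
    (hstep :
      t = μ / (Lmax * (‖∑ i ∈ J, w i • f' i x‖ ^ 2 / ∑ i ∈ J, w i * ‖f' i x‖ ^ 2)) ∨
      ∀ s : ℝ,
        fenchel ψ (xs - t • ∑ i ∈ J, w i • f' i x) +
          t * (⟪∑ i ∈ J, w i • f' i x, x⟫ - ∑ i ∈ J, w i / L i * ‖f' i x‖ ^ 2) ≤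
        fenchel ψ (xs - s • ∑ i ∈ J, w i • f' i x) +
          s * (⟪∑ i ∈ J, w i • f' i x, x⟫ - ∑ i ∈ J, w i / L i * ‖f' i x‖ ^ 2)) :
    ∀ z, (⟪∑ i ∈ J, w i • f' i x, z⟫ ≤
        ⟪∑ i ∈ J, w i • f' i x, x⟫ - ∑ i ∈ J, w i / L i * ‖f' i x‖ ^ 2) →
      Breg ψ (gradient (fenchel ψ) (xs - t • ∑ i ∈ J, w i • f' i x))
          (xs - t • ∑ i ∈ J, w i • f' i x) z ≤
        Breg ψ x xs z -
          μ / (2 * Lmax ^ 2 *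
            (‖∑ i ∈ J, w i • f' i x‖ ^ 2 / ∑ i ∈ J, w i * ‖f' i x‖ ^ 2)) *
          ∑ i ∈ J, w i * ‖f' i x‖ ^ 2 :=
  fun _ => stmt9_general hμ (continuousOn_univ.1 (hψconv.continuousOn isOpen_univ)) hsc hxs
    (fun i hi => (hw i hi).le) (fun i _ => hL i)
    (fun i _ => hLmax ▸ le_ciSup (Set.finite_range L).bddAbove i) hpos hstep
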